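/- Let n ≥ 2, α ∈ (0,1), and let {u_k} be a bounded sequence in H^α(ℝⁿ) such that lim_{k→∞} sup_{y∈ℝⁿ} ∫_{B(y,R)} |u_k|² dx = 0 for some R > 0. Then u_k → 0 in L^q(ℝⁿ) for every q ∈ (2, 2n/(n−2α)). -/

import Mathlib

open MeasureTheory Filter Topology Set Metric
open scoped ENNReal

/-- Key local estimate. -/
lemma aux_local (n : ℕ) (α : ℝ) (hα : 0 < α)
    (f : EuclideanSpace ℝ (Fin n) → ℝ) (hf : Measurable f) (r t : ℝ) (hr : 0 < r) (ht : 0 < t)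
    (H : ∀ x, volume ({z | t < |f z|} ∩ ball x r) ≤ volume (ball x r) / 2) :
    (ENNReal.ofReal (t ^ 2 / r ^ ((n : ℝ) + 2 * α)) *
        (volume (ball (0 : EuclideanSpace ℝ (Fin n)) r) / 2)) * volume {x | 2 * t < |f x|}
      ≤ ∫⁻ x, ∫⁻ z, ENNReal.ofReal (|f x - f z| ^ 2 / ‖x - z‖ ^ ((n : ℝ) + 2 * α)) := by
  have hS : MeasurableSet {x | 2 * t < |f x|} := measurableSet_lt measurable_const (by fun_prop)
  have hT : MeasurableSet {x | t < |f x|} := measurableSet_lt measurable_const (by fun_prop)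
  rw [← setLIntegral_const]
  refine le_trans (setLIntegral_mono' hS ?_) (setLIntegral_le_lintegral _ _)
  intro x hx
  have hx' : 2 * t < |f x| := hx
  have hvol : volume (ball (0 : EuclideanSpace ℝ (Fin n)) r) / 2
      ≤ volume (ball x r \ {z | t < |f z|}) := by
    have h1 : volume (ball x r) ≤ volume ({z | t < |f z|} ∩ ball x r) +
        volume (ball x r \ {z | t < |f z|}) := by
      rw [inter_comm]
      exact (measure_inter_add_sdiff _ hT).ge
    have h2 : volume (ball (0 : EuclideanSpace ℝ (Fin n)) r) = volume (ball x r) := by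
      exact (Measure.addHaar_ball_center volume x r).symm
    rw [h2]
    have h3 := h1.trans (add_le_add_left (H x) _)
    have hfin : volume (ball x r) / 2 ≠ ⊤ := by
      have : volume (ball x r) ≠ ⊤ := measure_ball_lt_top.ne
      exact (ENNReal.div_lt_top this (by norm_num)).ne
    nth_rewrite 1 [← ENNReal.add_halves (volume (ball x r))] at h3
    exact (ENNReal.add_le_add_iff_left hfin).1 h3
  have hU : MeasurableSet (ball x r \ {z | t < |f z|}) := measurableSet_ball.diff hT
  calc _ ≤ ENNReal.ofReal (t ^ 2 / r ^ ((n : ℝ) + 2 * α)) *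
        volume (ball x r \ {z | t < |f z|}) := by gcongr
    _ = ∫⁻ z in (ball x r \ {z | t < |f z|}), ENNReal.ofReal (t ^ 2 / r ^ ((n : ℝ) + 2 * α)) := by
        rw [setLIntegral_const]
    _ ≤ ∫⁻ z in (ball x r \ {z | t < |f z|}),
        ENNReal.ofReal (|f x - f z| ^ 2 / ‖x - z‖ ^ ((n : ℝ) + 2 * α)) := by
        refine setLIntegral_mono' hU ?_
        rintro z ⟨hz1, hz2⟩
        have hz2' : |f z| ≤ t := not_lt.1 hz2
        have hd : t ≤ |f x - f z| := by
          have := abs_sub_abs_le_abs_sub (f x) (f z)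
          linarith
        have hne : x - z ≠ 0 := by
          intro h
          have : f x - f z = 0 := by rw [sub_eq_zero.1 h, sub_self]
          rw [this, abs_zero] at hd
          linarith
        have hpos : 0 < ‖x - z‖ := norm_pos_iff.2 hne
        have hle : ‖x - z‖ ≤ r := by
          rw [← dist_eq_norm, dist_comm]; exact (mem_ball.1 hz1).le
        apply ENNReal.ofReal_le_ofReal
        gcongr
    _ ≤ _ := setLIntegral_le_lintegral _ _

lemma aux_cheb (n : ℕ) (f : EuclideanSpace ℝ (Fin n) → ℝ) (hf : Measurable f)
    (s : Set (EuclideanSpace ℝ (Fin n))) (hs : MeasurableSet s) (t : ℝ) (ht : 0 < t) (A : ℝ)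
    (h : ∫⁻ x in s, ENNReal.ofReal (f x ^ 2) ≤ ENNReal.ofReal A) :
    volume ({z | t < |f z|} ∩ s) ≤ ENNReal.ofReal (A / t ^ 2) := by
  have hT : MeasurableSet {x | t < |f x|} := measurableSet_lt measurable_const (by fun_prop)
  have h1 : ENNReal.ofReal (t ^ 2) * volume ({z | t < |f z|} ∩ s) ≤ ENNReal.ofReal A := by
    refine le_trans ?_ h
    rw [← setLIntegral_const]
    refine le_trans (setLIntegral_mono' (hT.inter hs) ?_)
      (lintegral_mono_set inter_subset_right)
    rintro x ⟨hx, -⟩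
    apply ENNReal.ofReal_le_ofReal
    have : t < |f x| := hx
    rw [← sq_abs (f x)]
    gcongr
  rw [ENNReal.ofReal_div_of_pos (by positivity), ENNReal.le_div_iff_mul_le, mul_comm]
  · exact h1
  · left; simp; positivity
  · left; simp

lemma aux_ballvol (n : ℕ) (x : EuclideanSpace ℝ (Fin n)) (r : ℝ) (hr : 0 < r) :
    volume (ball x r) = ENNReal.ofReal
      (r ^ n * (volume (ball (0 : EuclideanSpace ℝ (Fin n)) 1)).toReal) := by
  rw [Measure.addHaar_ball_of_pos _ _ hr, ENNReal.ofReal_mul (by positivity),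
    ENNReal.ofReal_toReal measure_ball_lt_top.ne]
  simp

/-- real form -/
lemma aux_local2 (n : ℕ) (α : ℝ) (hα : 0 < α)
    (f : EuclideanSpace ℝ (Fin n) → ℝ) (hf : Measurable f) (C V : ℝ)
    (hV : V = (volume (ball (0 : EuclideanSpace ℝ (Fin n)) 1)).toReal) (hV0 : 0 < V)
    (hb : ∫⁻ x, ∫⁻ z, ENNReal.ofReal (|f x - f z| ^ 2 / ‖x - z‖ ^ ((n : ℝ) + 2 * α))
      ≤ ENNReal.ofReal C)
    (r t : ℝ) (hr : 0 < r) (ht : 0 < t)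
    (H : ∀ x, volume ({z | t < |f z|} ∩ ball x r) ≤ ENNReal.ofReal (r ^ n * V / 2)) :
    volume {x | 2 * t < |f x|} ≤ ENNReal.ofReal (2 * C / V * r ^ (2 * α) / t ^ 2) := by
  have hv : ∀ x : EuclideanSpace ℝ (Fin n), volume (ball x r) / 2 =
      ENNReal.ofReal (r ^ n * V / 2) := by
    intro x
    rw [aux_ballvol n x r hr, ← hV, ENNReal.ofReal_div_of_pos (by norm_num)]
    simp
  have h := (aux_local n α hα f hf r t hr ht (fun x => by rw [hv]; exact H x)).trans hb
  rw [hv, ← ENNReal.ofReal_mul (by positivity)] at h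
  have e : t ^ 2 / r ^ ((n : ℝ) + 2 * α) * (r ^ n * V / 2) = t ^ 2 * V / (2 * r ^ (2 * α)) := by
    rw [Real.rpow_add hr, Real.rpow_natCast]
    field_simp
  rw [e] at h
  have hp : 0 < t ^ 2 * V / (2 * r ^ (2 * α)) := by positivity
  have e2 : 2 * C / V * r ^ (2 * α) / t ^ 2 = C / (t ^ 2 * V / (2 * r ^ (2 * α))) := by
    field_simp
  rw [e2, ENNReal.ofReal_div_of_pos hp, ENNReal.le_div_iff_mul_le, mul_comm]
  · exact h
  · left; simp; positivity
  · left; simp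

/-- recursion for the distribution function -/
lemma aux_rec (n : ℕ) (hn : 2 ≤ n) (α : ℝ) (hα : 0 < α)
    (f : EuclideanSpace ℝ (Fin n) → ℝ) (hf : Measurable f) (C V : ℝ)
    (hV : V = (volume (ball (0 : EuclideanSpace ℝ (Fin n)) 1)).toReal) (hV0 : 0 < V)
    (hb : ∫⁻ x, ∫⁻ z, ENNReal.ofReal (|f x - f z| ^ 2 / ‖x - z‖ ^ ((n : ℝ) + 2 * α))
      ≤ ENNReal.ofReal C)
    (b t : ℝ) (hb0 : 0 < b) (ht : 0 < t)
    (H : volume {z | t < |f z|} ≤ ENNReal.ofReal b) :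
    volume {x | 2 * t < |f x|} ≤
      ENNReal.ofReal (2 * C / V * (2 / V) ^ (2 * α / n) * b ^ (2 * α / n) / t ^ 2) := by
  have hn0 : (n : ℝ) ≠ 0 := by positivity
  have hr : 0 < (2 / V * b) ^ (1 / (n : ℝ)) := by positivity
  have := aux_local2 n α hα f hf C V hV hV0 hb ((2 / V * b) ^ (1 / (n : ℝ))) t hr ht ?_
  · rw [← Real.rpow_mul (by positivity), Real.mul_rpow (by positivity) hb0.le] at this
    convert this using 2
    rw [show 1 / (n : ℝ) * (2 * α) = 2 * α / n by ring]
    ring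
  · intro x
    refine (measure_mono inter_subset_left).trans (H.trans (le_of_eq ?_))
    congr 1
    rw [← Real.rpow_natCast, ← Real.rpow_mul (by positivity), one_div_mul_cancel hn0, Real.rpow_one]
    field_simp

/-- weak-type bound at the critical exponent -/
lemma aux_weak (n : ℕ) (hn : 2 ≤ n) (α : ℝ) (hα : 0 < α) (hα1 : α < 1) (C V : ℝ) (hC : 1 ≤ C)
    (hV : V = (volume (ball (0 : EuclideanSpace ℝ (Fin n)) 1)).toReal) (hV0 : 0 < V) :
    ∃ N : ℝ, 0 < N ∧ ∀ f : EuclideanSpace ℝ (Fin n) → ℝ, Measurable f →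
    (∫⁻ x, ∫⁻ z, ENNReal.ofReal (|f x - f z| ^ 2 / ‖x - z‖ ^ ((n : ℝ) + 2 * α))
      ≤ ENNReal.ofReal C) → (∫⁻ x, ENNReal.ofReal (f x ^ 2) ≤ ENNReal.ofReal C) →
    ∀ j : ℕ, volume {x | (2:ℝ) ^ j < |f x|} ≤
      ENNReal.ofReal (N * (2:ℝ) ^ (-(j * (2 * n / (n - 2 * α)) : ℝ))) := by
  have hn2 : (2:ℝ) ≤ n := by exact_mod_cast hn
  have hd : 0 < (n:ℝ) - 2 * α := by linarith
  set p : ℝ := 2 * n / (n - 2 * α) with hp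
  set θ : ℝ := 2 * α / n with hθ
  have hθ0 : 0 < θ := by positivity
  have hθ1 : θ < 1 := by rw [hθ, div_lt_one (by linarith)]; linarith
  have hpθ : p - p * θ = 2 := by
    rw [hp, hθ]; field_simp
  set A : ℝ := 2 * C / V * (2 / V) ^ θ with hA
  have hA0 : 0 < A := by positivity
  have hB0 : 0 < A * 2 ^ p := by positivity
  set N : ℝ := max C ((A * 2 ^ p) ^ (1 / (1 - θ))) with hN
  have hN0 : 0 < N := lt_of_lt_of_le (by linarith) (le_max_left _ _)
  have hNN : A * 2 ^ p * N ^ θ ≤ N := by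
    have h1 : A * 2 ^ p ≤ N ^ (1 - θ) := by
      calc A * 2 ^ p = ((A * 2 ^ p) ^ (1 / (1 - θ))) ^ (1 - θ) := by
            rw [← Real.rpow_mul hB0.le, one_div_mul_cancel (by linarith), Real.rpow_one]
        _ ≤ _ := Real.rpow_le_rpow (by positivity) (le_max_right _ _) (by linarith)
    calc A * 2 ^ p * N ^ θ ≤ N ^ (1 - θ) * N ^ θ := by gcongr
      _ = N := by rw [← Real.rpow_add hN0]; simp
  refine ⟨N, hN0, ?_⟩
  intro f hf hb hL j
  induction j with
  | zero =>
    have := aux_cheb n f hf univ MeasurableSet.univ 1 one_pos C (by simpa using hL)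
    simp only [inter_univ] at this
    simp only [pow_zero]
    refine this.trans (ENNReal.ofReal_le_ofReal ?_)
    simp [hN]
  | succ j ih =>
    have h := aux_rec n hn α hα f hf C V hV hV0 hb _ ((2:ℝ) ^ j) (by positivity) (by positivity) ih
    rw [pow_succ, mul_comm ((2:ℝ) ^ j) 2]
    refine h.trans (ENNReal.ofReal_le_ofReal ?_)
    rw [← hθ, ← hA, Real.mul_rpow hN0.le (by positivity), ← Real.rpow_mul (by norm_num)]
    have e1 : (2:ℝ) ^ (-(((j + 1 : ℕ) : ℝ) * p)) =
        2 ^ (-((j:ℝ) * p) * θ) * ((2:ℝ) ^ j ^ 1 ) ^ (-2 : ℝ) * (2 ^ p)⁻¹ := by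
      rw [pow_one, ← Real.rpow_natCast, ← Real.rpow_mul (by norm_num), ← Real.rpow_neg (by norm_num),
        ← Real.rpow_add (by norm_num), ← Real.rpow_add (by norm_num)]
      congr 1
      push_cast
      linear_combination (-(j:ℝ)) * hpθ
    rw [e1, pow_one, Real.rpow_neg (by positivity)]
    rw [show ((2:ℝ) ^ j) ^ (2:ℝ) = ((2:ℝ) ^ j) ^ 2 by
      rw [← Real.rpow_natCast ((2:ℝ) ^ j) 2]; norm_num]
    have h2p : (0:ℝ) < 2 ^ p := by positivity
    calc A * (N ^ θ * 2 ^ (-((j:ℝ) * p) * θ)) / ((2:ℝ) ^ j) ^ 2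
        = (A * 2 ^ p * N ^ θ) * (2 ^ (-((j:ℝ) * p) * θ) * (((2:ℝ) ^ j) ^ 2)⁻¹ * (2 ^ p)⁻¹) := by
          field_simp
      _ ≤ _ := by gcongr

lemma aux_point (q : ℝ) (hq : 2 < q) (s l : ℝ) (hs : 0 ≤ s) (hl : 0 < l) (J : ℕ) :
    ENNReal.ofReal (s ^ q) ≤ ENNReal.ofReal (l ^ (q - 2)) * ENNReal.ofReal (s ^ 2)
      + (if l < s then ENNReal.ofReal (((2:ℝ) ^ J) ^ q) else 0)
      + ∑' i : ℕ, (if (2:ℝ) ^ (i + J) < s then ENNReal.ofReal (((2:ℝ) ^ (i + J + 1)) ^ q) else 0) := by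
  by_cases h1 : s ≤ l
  · refine le_trans ?_ (le_trans (le_add_right le_rfl) (le_add_right le_rfl))
    rw [← ENNReal.ofReal_mul (by positivity)]
    apply ENNReal.ofReal_le_ofReal
    rcases hs.eq_or_lt with h0 | h0
    · rw [← h0, Real.zero_rpow (by linarith)]; simp
    · calc s ^ q = s ^ (q - 2) * s ^ 2 := by
            rw [← Real.rpow_natCast s 2, ← Real.rpow_add h0]; norm_num
        _ ≤ _ := by
            have : s ^ (q - 2) ≤ l ^ (q - 2) := Real.rpow_le_rpow hs h1 (by linarith)
            gcongr
  push Not at h1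
  by_cases h2 : s ≤ 2 ^ J
  · refine le_trans ?_ (le_trans (le_add_left le_rfl) (le_add_right le_rfl))
    rw [if_pos h1]
    exact ENNReal.ofReal_le_ofReal (Real.rpow_le_rpow hs h2 (by linarith))
  push Not at h2
  refine le_trans ?_ (le_add_left le_rfl)
  have hex : ∃ i : ℕ, s ≤ 2 ^ (i + J + 1) := by
    obtain ⟨i, hi⟩ := pow_unbounded_of_one_lt s (one_lt_two)
    exact ⟨i, hi.le.trans (pow_le_pow_right₀ one_le_two (by omega))⟩
  classical
  have hi := Nat.find_spec hex
  have hi' : (2:ℝ) ^ (Nat.find hex + J) < s := by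
    rcases Nat.eq_zero_or_pos (Nat.find hex) with h0 | h0
    · rw [h0]; simpa using h2
    · have := Nat.find_min hex (m := Nat.find hex - 1) (by omega)
      push Not at this
      rwa [show Nat.find hex - 1 + J + 1 = Nat.find hex + J by omega] at this
  refine le_trans ?_ (ENNReal.le_tsum (Nat.find hex))
  rw [if_pos hi']
  exact ENNReal.ofReal_le_ofReal (Real.rpow_le_rpow hs hi (by linarith))

theorem stmt15 (n : ℕ) (hn : 2 ≤ n) (α : ℝ) (hα : α ∈ Set.Ioo (0:ℝ) 1)
    (u : ℕ → EuclideanSpace ℝ (Fin n) → ℝ) (hmeas : ∀ k, Measurable (u k))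
    (C : ℝ)
    (hbdd : ∀ k,
      (∫⁻ x, ∫⁻ z,
          ENNReal.ofReal (|u k x - u k z| ^ 2 / ‖x - z‖ ^ ((n : ℝ) + 2 * α)))
        + (∫⁻ x, ENNReal.ofReal ((u k x) ^ 2)) ≤ ENNReal.ofReal C)
    (R : ℝ) (hR : 0 < R)
    (hvan : Tendsto (fun k => ⨆ y : EuclideanSpace ℝ (Fin n),
        ∫ x in ball y R, (u k x) ^ 2) atTop (𝓝 0)) :
    ∀ q : ℝ, 2 < q → q < 2 * n / (n - 2 * α) →
      Tendsto (fun k => ∫⁻ x, ENNReal.ofReal (|u k x| ^ q)) atTop (𝓝 0) := by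
  intro q hq hqp
  obtain ⟨hα0, hα1⟩ := hα
  have hn2 : (2:ℝ) ≤ n := by exact_mod_cast hn
  obtain ⟨C', hC1, hCC⟩ : ∃ C' : ℝ, 1 ≤ C' ∧ C ≤ C' := ⟨max 1 C, le_max_left _ _, le_max_right _ _⟩
  have hG : ∀ k, ∫⁻ x, ∫⁻ z, ENNReal.ofReal (|u k x - u k z| ^ 2 / ‖x - z‖ ^ ((n : ℝ) + 2 * α))
      ≤ ENNReal.ofReal C' := fun k =>
    (le_add_right le_rfl).trans ((hbdd k).trans (ENNReal.ofReal_le_ofReal hCC))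
  have hL : ∀ k, ∫⁻ x, ENNReal.ofReal (u k x ^ 2) ≤ ENNReal.ofReal C' := fun k =>
    (le_add_left le_rfl).trans ((hbdd k).trans (ENNReal.ofReal_le_ofReal hCC))
  clear hbdd
  obtain ⟨V, hV⟩ : ∃ V, V = (volume (ball (0 : EuclideanSpace ℝ (Fin n)) 1)).toReal := ⟨_, rfl⟩
  have hV0 : 0 < V := by
    rw [hV]
    exact ENNReal.toReal_pos (measure_ball_pos _ _ one_pos).ne' measure_ball_lt_top.ne
  have hint : ∀ k, Integrable (fun x => u k x ^ 2) := by
    intro k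
    refine ⟨((hmeas k).pow_const 2).aestronglyMeasurable, ?_⟩
    rw [hasFiniteIntegral_iff_ofReal (Eventually.of_forall fun x => sq_nonneg _)]
    exact (hL k).trans_lt ENNReal.ofReal_lt_top
  -- local L2 masses
  have hmass : ∀ k y, ∫⁻ x in ball y R, ENNReal.ofReal (u k x ^ 2) ≤
      ENNReal.ofReal (⨆ y : EuclideanSpace ℝ (Fin n), ∫ x in ball y R, (u k x) ^ 2) := by
    intro k y
    rw [← ofReal_integral_eq_lintegral_ofReal (hint k).integrableOn
      (Eventually.of_forall fun x => sq_nonneg _)]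
    apply ENNReal.ofReal_le_ofReal
    refine le_ciSup (f := fun y => ∫ x in ball y R, (u k x) ^ 2) ?_ y
    refine ⟨∫ x, u k x ^ 2, ?_⟩
    rintro _ ⟨y, rfl⟩
    exact setIntegral_le_integral (hint k) (Eventually.of_forall fun x => sq_nonneg _)
  -- convergence in measure
  have hcm : ∀ l : ℝ, 0 < l → Tendsto (fun k => volume {x | l < |u k x|}) atTop (𝓝 0) := by
    intro l hl
    rw [ENNReal.tendsto_nhds_zero]
    intro ε hε
    have hlim : Tendsto (fun r : ℝ => ENNReal.ofReal (2 * C' / V * r ^ (2 * α) / (l / 2) ^ 2))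
        (𝓝[>] 0) (𝓝 0) := by
      have : Tendsto (fun r : ℝ => 2 * C' / V * r ^ (2 * α) / (l / 2) ^ 2) (𝓝 0) (𝓝 0) := by
        have hc : ContinuousAt (fun r : ℝ => 2 * C' / V * r ^ (2 * α) / (l / 2) ^ 2) 0 := by
          have := Real.continuousAt_rpow_const 0 (2 * α) (Or.inr (by linarith))
          exact (continuousAt_const.mul this).div_const _
        have h0 := hc.tendsto
        simpa [Real.zero_rpow (show 2 * α ≠ 0 by linarith)] using h0
      have := ENNReal.tendsto_ofReal (this.mono_left (nhdsWithin_le_nhds (s := Ioi 0)))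
      simpa using this
    obtain ⟨r, hr1, hr2⟩ := (((ENNReal.tendsto_nhds_zero.1 hlim) ε hε).and
      (Ioo_mem_nhdsGT hR)).exists
    obtain ⟨hr0, hrR⟩ := hr2
    have hδ : 0 < r ^ n * V / 2 * (l / 2) ^ 2 := by positivity
    filter_upwards [hvan.eventually (gt_mem_nhds hδ)] with k hk
    have := aux_local2 n α hα0 (u k) (hmeas k) C' V hV hV0 (hG k) r (l / 2) hr0 (by positivity) ?_
    · rw [mul_div_cancel₀ l two_ne_zero] at this
      exact this.trans hr1
    · intro x
      have h1 : ∫⁻ z in ball x r, ENNReal.ofReal (u k z ^ 2) ≤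
          ENNReal.ofReal (r ^ n * V / 2 * (l / 2) ^ 2) :=
        (lintegral_mono_set (ball_subset_ball hrR.le)).trans
          ((hmass k x).trans (ENNReal.ofReal_le_ofReal hk.le))
      have h2 := aux_cheb n (u k) (hmeas k) _ measurableSet_ball (l / 2) (by positivity) _ h1
      rwa [mul_div_cancel_right₀ _ (by positivity)] at h2
  obtain ⟨N, hN0, hN⟩ := aux_weak n hn α hα0 hα1 C' V hC1 hV hV0
  set p : ℝ := 2 * n / (n - 2 * α) with hp
  -- tail series
  let g : ℕ → ℝ≥0∞ := fun j => ENNReal.ofReal (((2:ℝ) ^ (j + 1)) ^ q) *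
    ENNReal.ofReal (N * (2:ℝ) ^ (-(j * p : ℝ)))
  have hg : ∑' j, g j ≠ ⊤ := by
    have e : ∀ j, g j = ENNReal.ofReal (N * 2 ^ q * ((2:ℝ) ^ (q - p)) ^ j) := by
      intro j
      simp only [g]
      rw [← ENNReal.ofReal_mul (by positivity)]
      congr 1
      rw [← Real.rpow_natCast, ← Real.rpow_natCast, ← Real.rpow_mul (by norm_num),
        ← Real.rpow_mul (by norm_num)]
      rw [mul_left_comm, mul_assoc, ← Real.rpow_add (by norm_num), ← Real.rpow_add (by norm_num)]
      congr 2
      push_cast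
      ring
    simp_rw [e]
    have hs : Summable (fun j : ℕ => N * 2 ^ q * ((2:ℝ) ^ (q - p)) ^ j) := by
      apply Summable.mul_left
      apply summable_geometric_of_lt_one (by positivity)
      exact Real.rpow_lt_one_of_one_lt_of_neg (by norm_num) (by linarith)
    exact hs.tsum_ofReal_ne_top
  have htail := ENNReal.tendsto_sum_nat_add g hg
  have hmain : ∀ (l : ℝ), 0 < l → ∀ (J k : ℕ), ∫⁻ x, ENNReal.ofReal (|u k x| ^ q) ≤
      ENNReal.ofReal (l ^ (q - 2)) * ENNReal.ofReal C' +
      ENNReal.ofReal (((2:ℝ) ^ J) ^ q) * volume {x | l < |u k x|} + ∑' i, g (i + J) := by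
    intro l hl J k
    have hT : ∀ t : ℝ, MeasurableSet {x | t < |u k x|} := fun t =>
      measurableSet_lt measurable_const (hmeas k).abs
    have hif : ∀ (t : ℝ) (c : ℝ≥0∞), Measurable (fun x => if t < |u k x| then c else 0) :=
      fun t c => Measurable.ite (hT t) measurable_const measurable_const
    have hifint : ∀ (t : ℝ) (c : ℝ≥0∞), ∫⁻ x, (if t < |u k x| then c else 0) =
        c * volume {x | t < |u k x|} := by
      intro t c
      rw [← lintegral_indicator_const (hT t)]
      rfl
    refine (lintegral_mono fun x => aux_point q hq |u k x| l (abs_nonneg _) hl J).trans ?_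
    rw [lintegral_add_right _ (Measurable.ennreal_tsum fun i => hif _ _),
      lintegral_add_right _ (hif _ _), lintegral_tsum (fun i => (hif _ _).aemeasurable), hifint]
    simp_rw [hifint, sq_abs]
    rw [lintegral_const_mul _ ((hmeas k).pow_const 2).ennreal_ofReal]
    gcongr with i
    · exact hL k
    · exact mul_le_mul_right (hN (u k) (hmeas k) (hG k) (hL k) (i + J)) _
  rw [ENNReal.tendsto_nhds_zero]
  intro ε hε
  have hε3 : 0 < ε / 3 := ENNReal.div_pos hε.ne' (by norm_num)
  obtain ⟨J, hJ⟩ := ((ENNReal.tendsto_nhds_zero.1 htail) _ hε3).exists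
  have hlim : Tendsto (fun l : ℝ => ENNReal.ofReal (l ^ (q - 2)) * ENNReal.ofReal C')
      (𝓝[>] 0) (𝓝 0) := by
    have hc := (Real.continuousAt_rpow_const 0 (q - 2) (Or.inr (by linarith))).tendsto
    rw [Real.zero_rpow (by linarith)] at hc
    have h1 := ENNReal.tendsto_ofReal (hc.mono_left (nhdsWithin_le_nhds (s := Ioi 0)))
    have h2 := ENNReal.Tendsto.mul_const (b := ENNReal.ofReal C') h1 (Or.inr ENNReal.ofReal_ne_top)
    simpa using h2
  obtain ⟨l, hl1, hl0⟩ := (((ENNReal.tendsto_nhds_zero.1 hlim) _ hε3).and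
    self_mem_nhdsWithin).exists
  have hk := ENNReal.Tendsto.const_mul (a := ENNReal.ofReal (((2:ℝ) ^ J) ^ q)) (hcm l hl0)
    (Or.inr ENNReal.ofReal_ne_top)
  rw [mul_zero] at hk
  filter_upwards [(ENNReal.tendsto_nhds_zero.1 hk) _ hε3] with k hk
  calc _ ≤ _ := hmain l hl0 J k
    _ ≤ ε / 3 + ε / 3 + ε / 3 := by gcongr
    _ = ε := ENNReal.add_thirds ε
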